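/- In the bounded-degree uniform attachment process with m ≥ 2, for every integer r > 2 there is a constant C such that almost surely, for all sufficiently large n, the number of cycles of length r in G_n is at most C·ln n. -/

import Mathlib

open MeasureTheory ProbabilityTheory Filter Topology
open scoped ENNReal

/-- The degree of a vertex in a simple graph on `ℕ` (the number of its neighbours). -/
noncomputable def graphDeg (g : SimpleGraph ℕ) (v : ℕ) : ℕ := (g.neighborSet v).ncard

/-- The complete graph on the vertex set `[m] = {1,…,m}`, viewed as a simple graph on `ℕ`. -/
def initGraph (m : ℕ) : SimpleGraph ℕ :=
  SimpleGraph.fromRel (fun a b => a ∈ Finset.Icc 1 m ∧ b ∈ Finset.Icc 1 m)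

/-- The graph obtained from `g` by joining the (new) vertex `v` to every vertex of `S`. -/
def attachStep (g : SimpleGraph ℕ) (v : ℕ) (S : Finset ℕ) : SimpleGraph ℕ :=
  g ⊔ SimpleGraph.fromRel (fun a b => a = v ∧ b ∈ S)

/-- The set of vertices of `[n] = {1,…,n}` whose degree in `g` is strictly less than `d`. -/
noncomputable def lowDegSet (d : ℕ) (g : SimpleGraph ℕ) (n : ℕ) : Finset ℕ :=
  (Finset.Icc 1 n).filter (fun v => graphDeg g v < d)

/-- `IsUAProcess m d μ G` says that `(G n)_{n ≥ m}` (as random graphs on `ℕ`, with `G n`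
supported on the vertex set `[n] = {1,…,n}`) is the bounded-degree uniform attachment
process: `G m` is the complete graph on `[m]`, and `G (n+1)` is obtained from `G n` by
joining the new vertex `n+1` to a uniformly chosen `m`-element subset of the set of
vertices of `G n` of degree less than `d`, conditionally on `G n` and independently of
the past (note that `G n` determines the whole past of the process). -/
def IsUAProcess (m d : ℕ) {Ω : Type*} [MeasurableSpace Ω] (μ : Measure Ω)
    (G : ℕ → Ω → SimpleGraph ℕ) : Prop :=
  (∀ n g, MeasurableSet {ω | G n ω = g}) ∧
  (∀ ω, G m ω = initGraph m) ∧
  (∀ n, m ≤ n → ∀ g : SimpleGraph ℕ, ∀ S : Finset ℕ,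
    S ⊆ lowDegSet d g n → S.card = m →
    μ ({ω | G (n + 1) ω = attachStep g (n + 1) S} ∩ {ω | G n ω = g})
      = μ {ω | G n ω = g} / (((lowDegSet d g n).card.choose m : ℝ≥0∞)))

/-- The number of cycles of length `r` in `g`: the number of subgraphs of `g` isomorphic to
the cycle graph on `r` vertices. -/
noncomputable def cycleCount (g : SimpleGraph ℕ) (r : ℕ) : ℕ :=
  {C : g.Subgraph | Nonempty (C.coe ≃g SimpleGraph.cycleGraph r)}.ncard

/-!
A cycle of length `r` created by the vertex `n + 1` passes through it, so two of the `m` vertices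
it is joined to are the ends of a walk of length `r - 2` in `G n`. Degrees are at most `d`, hence
there are `O(n)` such pairs, while at least `n / (m + 2)` vertices have degree less than `d`; a new
cycle therefore appears with conditional probability `O(1 / n)`, and at most `d ^ (r - 1)` cycles
appear at once. For the number `X n` of `r`-cycles this gives
`𝔼[2 ^ X (n + 1)] ≤ (1 + K / n) * 𝔼[2 ^ X n]` with a constant `K`, so `𝔼[2 ^ X n] = O(n ^ K)`. By
Markov's inequality `2 ^ X n ≥ n ^ (K + 2)` has probability `O(1 / n ^ 2)`, and the Borel–Cantelli
lemma yields `X n ≤ (K + 2) * log n / log 2` for all large `n`, almost surely.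
-/

/-- The walks of length `k` in `G` starting at `v`, encoded as the tuples of their `k + 1`
successive vertices. -/
def walksFrom {V : Type*} (G : SimpleGraph V) (v : V) (k : ℕ) : Set (Fin (k + 1) → V) :=
  {x | x 0 = v ∧ ∀ i : Fin k, G.Adj (x i.castSucc) (x i.succ)}

/-- The copies of `H` in `G`, i.e. the subgraphs of `G` isomorphic to `H`. The cycles of length `r`
counted by `cycleCount` are the copies of `SimpleGraph.cycleGraph r`. -/
def subgraphCopies {V W : Type*} (G : SimpleGraph V) (H : SimpleGraph W) : Set G.Subgraph :=
  {C | Nonempty (C.coe ≃g H)}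

section Copies

variable {V W : Type*} {G G' : SimpleGraph V} {d : ℕ}

lemma encard_walksFrom_le (hd : ∀ v, (G.neighborSet v).encard ≤ d) (v : V) (k : ℕ) :
    (walksFrom G v k).encard ≤ d ^ k := by
  induction k generalizing v with
  | zero =>
    refine Set.encard_le_one_iff.2 fun x y hx hy => funext fun i => ?_
    rw [Fin.fin_one_eq_zero i, hx.1, hy.1]
  | succ k ih =>
    have hfin : (G.neighborSet v).Finite := Set.finite_of_encard_le_coe (hd v)
    have hcover : walksFrom G v (k + 1) ⊆
        ⋃ w ∈ hfin.toFinset, Fin.cons (α := fun _ => V) v '' walksFrom G w k := by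
      rintro x ⟨hx0, hx⟩
      simp only [Set.Finite.mem_toFinset, Set.mem_iUnion₂]
      exact ⟨x 1, hx0 ▸ hx 0, Fin.tail x, ⟨rfl, fun i => hx i.succ⟩, hx0 ▸ Fin.cons_self_tail x⟩
    calc (walksFrom G v (k + 1)).encard
        ≤ ∑ w ∈ hfin.toFinset, (Fin.cons (α := fun _ => V) v '' walksFrom G w k).encard :=
          (Set.encard_le_encard hcover).trans (Finset.set_encard_biUnion_le _ _)
      _ ≤ ∑ _w ∈ hfin.toFinset, (d : ℕ∞) ^ k :=
          Finset.sum_le_sum fun w _ => (Set.encard_image_le _ _).trans (ih w)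
      _ = (G.neighborSet v).encard * d ^ k := by
          rw [Finset.sum_const, nsmul_eq_mul, hfin.encard_eq_coe_toFinset_card]
      _ ≤ d ^ (k + 1) := by
          rw [pow_succ']
          gcongr
          exact hd v

lemma encard_subgraphCopies_inter_le (h : G ≤ G') (H : SimpleGraph W) :
    (subgraphCopies G' H ∩ {C | ∀ a b, C.Adj a b → G.Adj a b}).encard
      ≤ (subgraphCopies G H).encard := by
  have hadj : ∀ C : G'.Subgraph, (∀ a b, C.Adj a b → G.Adj a b) →
      ∀ a b, (C.comap (SimpleGraph.Hom.ofLE h)).Adj a b ↔ C.Adj a b :=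
    fun C hC a b => and_iff_right_of_imp (hC a b)
  refine Set.encard_le_encard_of_injOn (f := SimpleGraph.Subgraph.comap (.ofLE h)) ?_ ?_
  · rintro C ⟨⟨e⟩, hC⟩
    let e' : (C.comap (SimpleGraph.Hom.ofLE h)).coe ≃g C.coe :=
      { toEquiv := Equiv.refl _
        map_rel_iff' := fun {a b} => (hadj C hC a b).symm }
    exact ⟨e'.trans e⟩
  · rintro C ⟨-, hC⟩ D ⟨-, hD⟩ hCD
    refine SimpleGraph.Subgraph.ext (congrArg SimpleGraph.Subgraph.verts hCD :) ?_
    ext a b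
    rw [← hadj C hC, ← hadj D hD, hCD]

lemma cycleGraph_adj_add_right {k : ℕ} (i : Fin (k + 1)) {a b : Fin (k + 1)} :
    (SimpleGraph.cycleGraph (k + 1)).Adj (a + i) (b + i) ↔
      (SimpleGraph.cycleGraph (k + 1)).Adj a b := by
  rw [SimpleGraph.cycleGraph_eq_circulantGraph]
  exact SimpleGraph.circulantGraph_adj_translate

lemma exists_copy_cycleGraph_apply_zero {k : ℕ} {C : G.Subgraph}
    (hC : C ∈ subgraphCopies G (SimpleGraph.cycleGraph (k + 1))) {v : V} (hv : v ∈ C.verts) :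
    ∃ f : SimpleGraph.Copy (SimpleGraph.cycleGraph (k + 1)) G, f.toSubgraph = C ∧ f 0 = v := by
  obtain ⟨e⟩ := hC
  let rotation : SimpleGraph.cycleGraph (k + 1) ≃g SimpleGraph.cycleGraph (k + 1) :=
    { toEquiv := Equiv.addRight (e ⟨v, hv⟩)
      map_rel_iff' := cycleGraph_adj_add_right _ }
  let e' : SimpleGraph.cycleGraph (k + 1) ≃g C.coe := rotation.trans e.symm
  refine ⟨⟨C.hom.comp e'.toHom, SimpleGraph.Subgraph.hom_injective.comp e'.injective⟩, ?_, ?_⟩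
  · simp [SimpleGraph.Copy.toSubgraph, SimpleGraph.Subgraph.map_comp]
  · change ((e.symm (0 + e ⟨v, hv⟩) : C.verts) : V) = v
    rw [zero_add, e.symm_apply_apply]

lemma coe_copy_mem_walksFrom {k : ℕ} (f : SimpleGraph.Copy (SimpleGraph.cycleGraph (k + 1)) G) :
    ⇑f ∈ walksFrom G (f 0) k :=
  ⟨rfl, fun i => f.toHom.map_adj <| SimpleGraph.pathGraph_le_cycleGraph <|
    SimpleGraph.pathGraph_adj.2 <| by simp⟩

lemma encard_cycles_through_le (hd : ∀ v, (G.neighborSet v).encard ≤ d) (v : V) (k : ℕ) :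
    (subgraphCopies G (SimpleGraph.cycleGraph (k + 1)) ∩ {C | v ∈ C.verts}).encard ≤ d ^ k := by
  have hcover : subgraphCopies G (SimpleGraph.cycleGraph (k + 1)) ∩ {C | v ∈ C.verts} ⊆
      SimpleGraph.Copy.toSubgraph ''
        {f : SimpleGraph.Copy (SimpleGraph.cycleGraph (k + 1)) G | f 0 = v} := by
    rintro C ⟨hC, hv⟩
    obtain ⟨f, hfC, hf0⟩ := exists_copy_cycleGraph_apply_zero hC hv
    exact ⟨f, hf0, hfC⟩
  calc _ ≤ _ := Set.encard_le_encard hcover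
    _ ≤ _ := Set.encard_image_le _ _
    _ ≤ (walksFrom G v k).encard :=
      Set.encard_le_encard_of_injOn (f := DFunLike.coe)
        (fun f hf => (show f 0 = v from hf) ▸ coe_copy_mem_walksFrom f) DFunLike.coe_injective.injOn
    _ ≤ d ^ k := encard_walksFrom_le hd v k

lemma finite_subgraphCopies_cycleGraph (hG : G.support.Finite) (k : ℕ) :
    (subgraphCopies G (SimpleGraph.cycleGraph (k + 2))).Finite := by
  have hcopies : {f : SimpleGraph.Copy (SimpleGraph.cycleGraph (k + 2)) G |
      ∀ i, f i ∈ G.support}.Finite :=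
    (Set.Finite.pi' fun _ => hG).preimage DFunLike.coe_injective.injOn
  refine (hcopies.image SimpleGraph.Copy.toSubgraph).subset fun C hC => ?_
  obtain ⟨e⟩ := id hC
  obtain ⟨f, rfl, -⟩ := exists_copy_cycleGraph_apply_zero hC (e.symm 0).2
  have hadj (i : Fin (k + 2)) : (SimpleGraph.cycleGraph (k + 2)).Adj i (i + 1) := by
    simp [SimpleGraph.cycleGraph_adj]
  exact ⟨f, fun i => ⟨f (i + 1), f.toHom.map_adj (hadj i)⟩, rfl⟩

end Copies

section WalkJoined

variable {V : Type*} {G : SimpleGraph V} {d : ℕ}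

/-- `S` contains two distinct vertices which are the ends of a walk of length `ℓ` in `G`. Only in
this case can joining a new vertex to all of `S` create a cycle of length `ℓ + 2`. -/
def IsWalkJoined (G : SimpleGraph V) (ℓ : ℕ) (S : Finset V) : Prop :=
  ∃ u ∈ S, ∃ x ∈ walksFrom G u ℓ, x (Fin.last ℓ) ∈ S ∧ x (Fin.last ℓ) ≠ u

lemma exists_finset_walk_ends (hd : ∀ v, (G.neighborSet v).encard ≤ d) (u : V) (ℓ : ℕ) :
    ∃ T : Finset V, T.card ≤ d ^ ℓ ∧ ∀ x ∈ walksFrom G u ℓ, x (Fin.last ℓ) ∈ T := by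
  have hcard : ((fun x => x (Fin.last ℓ)) '' walksFrom G u ℓ).encard ≤ (d ^ ℓ : ℕ) :=
    (Set.encard_image_le _ _).trans (by exact_mod_cast encard_walksFrom_le hd u ℓ)
  have hfin := Set.finite_of_encard_le_coe hcard
  refine ⟨hfin.toFinset, ?_, fun x hx => hfin.mem_toFinset.2 ⟨x, hx, rfl⟩⟩
  rwa [hfin.encard_eq_coe_toFinset_card, Nat.cast_le] at hcard

open Classical in
lemma card_filter_isWalkJoined_le (hd : ∀ v, (G.neighborSet v).encard ≤ d) (A : Finset V) {m : ℕ}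
    (hm : 2 ≤ m) (ℓ : ℕ) :
    ((A.powersetCard m).filter (IsWalkJoined G ℓ)).card
      ≤ A.card * d ^ ℓ * (A.card - 2).choose (m - 2) := by
  choose T hT hends using fun u => exists_finset_walk_ends hd u ℓ
  have hcover : (A.powersetCard m).filter (IsWalkJoined G ℓ) ⊆
      A.biUnion fun u => ((T u ∩ A).erase u).biUnion fun w =>
        (A.powersetCard m).filter ({u, w} ⊆ ·) := by
    intro S hS
    obtain ⟨hSA, u, hu, x, hx, hxS, hxu⟩ := Finset.mem_filter.1 hS
    have hsub := (Finset.mem_powersetCard.1 hSA).1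
    simp only [Finset.mem_biUnion, Finset.mem_erase, Finset.mem_inter, Finset.mem_filter]
    exact ⟨u, hsub hu, _, ⟨hxu, hends u x hx, hsub hxS⟩, hSA,
      Finset.insert_subset hu (Finset.singleton_subset_iff.2 hxS)⟩
  have hpair : ∀ u ∈ A, ∀ w ∈ (T u ∩ A).erase u,
      ((A.powersetCard m).filter ({u, w} ⊆ ·)).card ≤ (A.card - 2).choose (m - 2) := by
    intro u hu w hw
    obtain ⟨hwu, hw⟩ := Finset.mem_erase.1 hw
    have hsub : {u, w} ⊆ A :=
      Finset.insert_subset hu (Finset.singleton_subset_iff.2 (Finset.mem_inter.1 hw).2)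
    have hcard : ({u, w} : Finset V).card = 2 := Finset.card_pair hwu.symm
    rw [Finset.card_filter_powersetCard_subset _ _ _ hsub (hcard.trans_le hm), hcard]
  have hends_card : ∀ u, ((T u ∩ A).erase u).card ≤ d ^ ℓ := fun u =>
    (Finset.card_le_card ((Finset.erase_subset _ _).trans Finset.inter_subset_left)).trans (hT u)
  rw [mul_assoc]
  exact (Finset.card_le_card hcover).trans <| Finset.card_biUnion_le_card_mul _ _ _ fun u hu =>
    (Finset.card_biUnion_le_card_mul _ _ _ (hpair u hu)).trans <| by gcongr; exact hends_card u

lemma mul_pred_mul_choose_sub_two {a m : ℕ} (ha : 2 ≤ a) (hm : 2 ≤ m) :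
    a * (a - 1) * (a - 2).choose (m - 2) = m * (m - 1) * a.choose m := by
  obtain ⟨a, rfl⟩ := Nat.exists_eq_add_of_le' ha
  obtain ⟨m, rfl⟩ := Nat.exists_eq_add_of_le' hm
  calc (a + 2) * (a + 1) * a.choose m = (a + 2) * ((a + 1) * a.choose m) := mul_assoc _ _ _
    _ = (a + 2) * (a + 1).choose (m + 1) * (m + 1) := by
      rw [Nat.add_one_mul_choose_eq, mul_assoc]
    _ = (m + 2) * (m + 1) * (a + 2).choose (m + 2) := by
      rw [Nat.add_one_mul_choose_eq]
      ring

open Classical in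
lemma pred_mul_card_filter_isWalkJoined_le (hd : ∀ v, (G.neighborSet v).encard ≤ d) (A : Finset V)
    {m : ℕ} (hm : 2 ≤ m) (ℓ : ℕ) :
    (A.card - 1) * ((A.powersetCard m).filter (IsWalkJoined G ℓ)).card
      ≤ m * (m - 1) * d ^ ℓ * A.card.choose m := by
  obtain hA | hA := lt_or_ge A.card 2
  · simp [show A.card - 1 = 0 by omega]
  · calc (A.card - 1) * ((A.powersetCard m).filter (IsWalkJoined G ℓ)).card
        ≤ (A.card - 1) * (A.card * d ^ ℓ * (A.card - 2).choose (m - 2)) := by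
          gcongr
          exact card_filter_isWalkJoined_le hd A hm ℓ
      _ = A.card * (A.card - 1) * (A.card - 2).choose (m - 2) * d ^ ℓ := by ring
      _ = m * (m - 1) * d ^ ℓ * A.card.choose m := by
          rw [mul_pred_mul_choose_sub_two hA hm]
          ring

end WalkJoined

section AttachStep

variable {g : SimpleGraph ℕ} {v : ℕ} {S : Finset ℕ}

lemma attachStep_adj {a b : ℕ} :
    (attachStep g v S).Adj a b ↔ g.Adj a b ∨ a ≠ b ∧ (a = v ∧ b ∈ S ∨ b = v ∧ a ∈ S) := by
  simp [attachStep, SimpleGraph.fromRel_adj]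

lemma adj_of_attachStep_adj {a b : ℕ} (h : (attachStep g v S).Adj a b) (ha : a ≠ v) (hb : b ≠ v) :
    g.Adj a b := by
  grind [attachStep_adj]

lemma neighborSet_attachStep_self_subset (hg : g.IsIsolated v) :
    (attachStep g v S).neighborSet v ⊆ S := fun w hw => by
  have := hg w
  grind [attachStep_adj, SimpleGraph.mem_neighborSet]

lemma neighborSet_attachStep_self (hg : g.IsIsolated v) (hv : v ∉ S) :
    (attachStep g v S).neighborSet v = S :=
  (neighborSet_attachStep_self_subset hg).antisymm fun _ hw =>
    attachStep_adj.2 <| .inr ⟨fun h => hv (h ▸ hw), .inl ⟨rfl, hw⟩⟩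

lemma support_attachStep_subset : (attachStep g v S).support ⊆ g.support ∪ insert v S := by
  rintro a ⟨b, hab⟩
  obtain h | ⟨-, ⟨rfl, -⟩ | ⟨-, ha⟩⟩ := attachStep_adj.1 hab
  · exact .inl ⟨b, h⟩
  · exact .inr (.inl rfl)
  · exact .inr (.inr ha)

lemma isWalkJoined_of_mem_verts (hg : g.IsIsolated v) {k : ℕ} {C : (attachStep g v S).Subgraph}
    (hC : C ∈ subgraphCopies (attachStep g v S) (SimpleGraph.cycleGraph (k + 3)))
    (hv : v ∈ C.verts) : IsWalkJoined g (k + 1) S := by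
  obtain ⟨f, -, hf⟩ := exists_copy_cycleGraph_apply_zero hC hv
  have hne (i : Fin (k + 2)) : f i.succ ≠ v := fun h =>
    i.succ_ne_zero (f.injective (h.trans hf.symm))
  have hwalk := (coe_copy_mem_walksFrom f).2
  have hopen : (attachStep g v S).Adj (f 0) (f 1) := hwalk 0
  have hclose : (attachStep g v S).Adj (f 0) (f (Fin.last (k + 2))) :=
    f.toHom.map_adj (by simp [SimpleGraph.cycleGraph_adj])
  rw [hf] at hopen hclose
  refine ⟨f 1, neighborSet_attachStep_self_subset hg hopen, fun i => f i.succ,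
    ⟨rfl, fun i => adj_of_attachStep_adj (hwalk i.succ) (hne _) (hne _)⟩,
    neighborSet_attachStep_self_subset hg hclose, f.injective.ne ?_⟩
  simp [Fin.ext_iff]

lemma encard_subgraphCopies_attachStep_le {W : Type*} (H : SimpleGraph W) :
    (subgraphCopies (attachStep g v S) H).encard ≤ (subgraphCopies g H).encard +
      (subgraphCopies (attachStep g v S) H ∩ {C | v ∈ C.verts}).encard := by
  have hcover : subgraphCopies (attachStep g v S) H ⊆
      (subgraphCopies (attachStep g v S) H ∩ {C | ∀ a b, C.Adj a b → g.Adj a b}) ∪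
        (subgraphCopies (attachStep g v S) H ∩ {C | v ∈ C.verts}) := by
    intro C hC
    by_cases hv : v ∈ C.verts
    · exact .inr ⟨hC, hv⟩
    · exact .inl ⟨hC, fun a b hab => adj_of_attachStep_adj hab.adj_sub
        (fun h => hv (h ▸ hab.fst_mem)) (fun h => hv (h ▸ hab.snd_mem))⟩
  refine (Set.encard_le_encard hcover).trans ((Set.encard_union_le _ _).trans ?_)
  gcongr
  exact encard_subgraphCopies_inter_le le_sup_left H

lemma coe_cycleCount (hg : g.support.Finite) (k : ℕ) :
    (cycleCount g (k + 2) : ℕ∞) = (subgraphCopies g (SimpleGraph.cycleGraph (k + 2))).encard :=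
  (finite_subgraphCopies_cycleGraph hg k).cast_ncard_eq

lemma finite_support_attachStep (hg : g.support.Finite) : (attachStep g v S).support.Finite :=
  (hg.union (S.finite_toSet.insert v)).subset support_attachStep_subset

lemma cycleCount_attachStep_le {d : ℕ} (hg : g.support.Finite)
    (hd : ∀ w, ((attachStep g v S).neighborSet w).encard ≤ d) (k : ℕ) :
    cycleCount (attachStep g v S) (k + 2) ≤ cycleCount g (k + 2) + d ^ (k + 1) := by
  rw [← Nat.cast_le (α := ℕ∞), Nat.cast_add, coe_cycleCount (finite_support_attachStep hg),
    coe_cycleCount hg, Nat.cast_pow]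
  refine (encard_subgraphCopies_attachStep_le _).trans ?_
  gcongr
  exact encard_cycles_through_le hd v (k + 1)

lemma cycleCount_attachStep_le_of_not_isWalkJoined (hg : g.support.Finite) (hv : g.IsIsolated v)
    {k : ℕ} (hS : ¬ IsWalkJoined g (k + 1) S) :
    cycleCount (attachStep g v S) (k + 3) ≤ cycleCount g (k + 3) := by
  have hempty : subgraphCopies (attachStep g v S) (SimpleGraph.cycleGraph (k + 3)) ∩
      {C | v ∈ C.verts} = ∅ :=
    Set.eq_empty_iff_forall_notMem.2 fun C hC => hS (isWalkJoined_of_mem_verts hv hC.1 hC.2)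
  rw [← Nat.cast_le (α := ℕ∞), coe_cycleCount (finite_support_attachStep hg), coe_cycleCount hg]
  simpa [hempty] using encard_subgraphCopies_attachStep_le (g := g) (v := v) (S := S)
    (SimpleGraph.cycleGraph (k + 3))

end AttachStep

section Degrees

variable {g : SimpleGraph ℕ} {v w : ℕ} {S : Finset ℕ}

lemma graphDeg_attachStep_self (hg : g.IsIsolated v) (hv : v ∉ S) :
    graphDeg (attachStep g v S) v = S.card := by
  rw [graphDeg, neighborSet_attachStep_self hg hv, Set.ncard_coe_finset]

lemma graphDeg_attachStep_of_ne (hg : g.IsIsolated v) (hfin : (g.neighborSet w).Finite)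
    (hw : w ≠ v) :
    graphDeg (attachStep g v S) w = graphDeg g w + if w ∈ S then 1 else 0 := by
  have hv : v ∉ g.neighborSet w := fun h => hg w h.symm
  have hnbr : (attachStep g v S).neighborSet w =
      if w ∈ S then insert v (g.neighborSet w) else g.neighborSet w := by
    ext a
    split_ifs <;>
      simp only [SimpleGraph.mem_neighborSet, attachStep_adj, Set.mem_insert_iff] <;> grind
  rw [graphDeg, hnbr]
  split_ifs
  · exact Set.ncard_insert_of_notMem hv hfin
  · rfl

lemma initGraph_adj {n a b : ℕ} :
    (initGraph n).Adj a b ↔ a ≠ b ∧ a ∈ Finset.Icc 1 n ∧ b ∈ Finset.Icc 1 n := by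
  simp only [initGraph, SimpleGraph.fromRel_adj]
  tauto

lemma neighborSet_initGraph_subset (n v : ℕ) : (initGraph n).neighborSet v ⊆ Finset.Icc 1 n :=
  fun _ h => (initGraph_adj.1 h).2.2

lemma support_initGraph_subset (n : ℕ) : (initGraph n).support ⊆ Finset.Icc 1 n :=
  fun _ ⟨_, h⟩ => (initGraph_adj.1 h).2.1

lemma isIsolated_initGraph_succ (n : ℕ) : (initGraph n).IsIsolated (n + 1) := fun _ h => by
  simpa using (initGraph_adj.1 h).2.1

lemma graphDeg_initGraph_of_mem {n : ℕ} (hv : v ∈ Finset.Icc 1 n) :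
    graphDeg (initGraph n) v = n - 1 := by
  have hnbr : (initGraph n).neighborSet v = (Finset.Icc 1 n).erase v := by
    ext a
    simp only [SimpleGraph.mem_neighborSet, initGraph_adj, Finset.coe_erase]
    grind
  rw [graphDeg, hnbr, Set.ncard_coe_finset, Finset.card_erase_of_mem hv, Nat.card_Icc,
    Nat.add_sub_cancel]

lemma graphDeg_le_of_le_initGraph {n : ℕ} (hg : g ≤ initGraph n) (v : ℕ) : graphDeg g v ≤ n := by
  have hsub : g.neighborSet v ⊆ Finset.Icc 1 n :=
    (SimpleGraph.neighborSet_mono hg v).trans (neighborSet_initGraph_subset n v)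
  simpa [graphDeg] using Set.ncard_le_ncard hsub (Finset.finite_toSet _)

lemma attachStep_le_initGraph {n : ℕ} (hg : g ≤ initGraph n) (hS : S ⊆ Finset.Icc 1 n) :
    attachStep g (n + 1) S ≤ initGraph (n + 1) := fun a b h => by
  have hab := @hg a b
  grind [attachStep_adj, initGraph_adj]

lemma lowDegSet_subset_Icc (d : ℕ) (g : SimpleGraph ℕ) (n : ℕ) :
    lowDegSet d g n ⊆ Finset.Icc 1 n :=
  Finset.filter_subset _ _

end Degrees

/-- Deterministic properties of the graph `G n` in the process with parameters `m` and `d`: they are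
preserved by every step, and they force a positive proportion of the vertices to have degree less
than `d`. The degree sum is at most that of `K_m` plus `2 * m` for each later vertex. -/
structure IsAdmissible (m d n : ℕ) (g : SimpleGraph ℕ) : Prop where
  le_initGraph : g ≤ initGraph n
  graphDeg_le : ∀ v, graphDeg g v ≤ d
  le_graphDeg_add_one : ∀ v ∈ Finset.Icc 1 n, m ≤ graphDeg g v + 1
  sum_graphDeg_add_le : ∑ v ∈ Finset.Icc 1 n, graphDeg g v + m * (m + 1) ≤ 2 * m * n

lemma isAdmissible_initGraph {m d : ℕ} (hm : m ≤ d) : IsAdmissible m d m (initGraph m) where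
  le_initGraph := le_rfl
  graphDeg_le v := (graphDeg_le_of_le_initGraph le_rfl v).trans hm
  le_graphDeg_add_one v hv := by
    rw [graphDeg_initGraph_of_mem hv]
    omega
  sum_graphDeg_add_le := by
    rw [Finset.sum_congr rfl fun v => graphDeg_initGraph_of_mem, Finset.sum_const, Nat.card_Icc,
      smul_eq_mul]
    cases m <;> grind

lemma finite_setOf_le_initGraph (n : ℕ) : {g | g ≤ initGraph n}.Finite := by
  have hfin : (initGraph n).edgeSet.Finite :=
    (Set.toFinite ((Finset.Icc 1 n).sym2 : Set (Sym2 ℕ))).subset fun e => by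
      induction e with
      | h a b =>
        intro h
        have := initGraph_adj.1 h
        simp_all
  exact (hfin.finite_subsets.preimage SimpleGraph.edgeSet_injective.injOn).subset
    fun g hg => SimpleGraph.edgeSet_mono hg

lemma finite_setOf_isAdmissible {m d n : ℕ} : {g | IsAdmissible m d n g}.Finite :=
  (finite_setOf_le_initGraph n).subset fun _ hg => hg.le_initGraph

namespace IsAdmissible

variable {m d n : ℕ} {g : SimpleGraph ℕ} {S : Finset ℕ}

lemma finite_support (hg : IsAdmissible m d n g) : g.support.Finite :=
  (Finset.finite_toSet _).subset
    ((SimpleGraph.support_mono hg.le_initGraph).trans (support_initGraph_subset n))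

lemma isIsolated_succ (hg : IsAdmissible m d n g) : g.IsIsolated (n + 1) := fun w h =>
  isIsolated_initGraph_succ n w (hg.le_initGraph h)

lemma finite_neighborSet (hg : IsAdmissible m d n g) (v : ℕ) : (g.neighborSet v).Finite :=
  hg.finite_support.subset (g.neighborSet_subset_support v)

lemma encard_neighborSet_le (hg : IsAdmissible m d n g) (v : ℕ) : (g.neighborSet v).encard ≤ d := by
  rw [← (hg.finite_neighborSet v).cast_ncard_eq]
  exact_mod_cast hg.graphDeg_le v

lemma attach (hg : IsAdmissible m d n g) (hd : m ≤ d) (hS : S ⊆ lowDegSet d g n)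
    (hcard : S.card = m) : IsAdmissible m d (n + 1) (attachStep g (n + 1) S) := by
  have hSn : S ⊆ Finset.Icc 1 n := hS.trans (lowDegSet_subset_Icc d g n)
  have hnew : graphDeg (attachStep g (n + 1) S) (n + 1) = m :=
    hcard ▸ graphDeg_attachStep_self hg.isIsolated_succ fun h => by simpa using hSn h
  have hold : ∀ v ≠ n + 1, graphDeg (attachStep g (n + 1) S) v =
      graphDeg g v + if v ∈ S then 1 else 0 := fun v =>
    graphDeg_attachStep_of_ne hg.isIsolated_succ (hg.finite_neighborSet v)
  refine ⟨attachStep_le_initGraph hg.le_initGraph hSn, fun v => ?_, fun v hv => ?_, ?_⟩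
  · obtain rfl | hv := eq_or_ne v (n + 1)
    · omega
    · have hdeg := hg.graphDeg_le v
      have hlow : v ∈ S → graphDeg g v < d := fun h => (Finset.mem_filter.1 (hS h)).2
      grind
  · obtain rfl | hvn := eq_or_ne v (n + 1)
    · omega
    · have hdeg := hg.le_graphDeg_add_one v (by grind)
      grind
  · have hsum : ∑ v ∈ Finset.Icc 1 n, graphDeg (attachStep g (n + 1) S) v =
        ∑ v ∈ Finset.Icc 1 n, graphDeg g v + m := by
      rw [Finset.sum_congr rfl fun v hv => hold v (by grind), Finset.sum_add_distrib,
        Finset.sum_ite_mem, Finset.inter_eq_right.2 hSn, Finset.sum_const, smul_eq_mul, mul_one,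
        hcard]
    rw [Finset.sum_Icc_succ_top (by omega), hnew, hsum]
    linarith [hg.sum_graphDeg_add_le]

lemma add_le_mul_card_lowDegSet (hg : IsAdmissible m d n g) (hd : 2 * m < d) :
    n + m * (m + 1) ≤ (m + 2) * (lowDegSet d g n).card := by
  -- The average degree is below `2 * m`, vertices outside `lowDegSet` have degree at least
  -- `2 * m + 1`, and the others fall short of `2 * m + 1` by at most `m + 2`.
  have hpoint : ∀ v ∈ Finset.Icc 1 n,
      2 * m + 1 ≤ graphDeg g v + if graphDeg g v < d then m + 2 else 0 := fun v hv => by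
    have := hg.le_graphDeg_add_one v hv
    grind
  have hsum := Finset.sum_le_sum hpoint
  rw [Finset.sum_const, Nat.card_Icc, Finset.sum_add_distrib, ← Finset.sum_filter,
    Finset.sum_const, smul_eq_mul, smul_eq_mul] at hsum
  change _ ≤ _ + (lowDegSet d g n).card * _ at hsum
  have := hg.sum_graphDeg_add_le
  grind

lemma le_card_lowDegSet (hg : IsAdmissible m d n g) (hd : 2 * m < d) (hn : m ≤ n) :
    m ≤ (lowDegSet d g n).card := by
  have := hg.add_le_mul_card_lowDegSet hd
  nlinarith

lemma le_mul_card_lowDegSet_sub_one (hg : IsAdmissible m d n g) (hm : 2 ≤ m) (hd : 2 * m < d) :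
    n ≤ (m + 2) * ((lowDegSet d g n).card - 1) := by
  have hcard := hg.add_le_mul_card_lowDegSet hd
  have hm' : m + 2 ≤ m * (m + 1) := by nlinarith
  rw [Nat.mul_sub_one]
  omega

end IsAdmissible

/-- The possible neighbourhoods of the vertex `n + 1` in `G (n + 1)` when `G n = g`. -/
noncomputable def attachSets (m d n : ℕ) (g : SimpleGraph ℕ) : Finset (Finset ℕ) :=
  (lowDegSet d g n).powersetCard m

/-- An exponent `K` for which the expectation of `2 ^ cycleCount (G n) (k + 3)` is `O(n ^ K)`. A
uniform choice from `attachSets m d n g` creates a new cycle with probability at most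
`(m + 2) * (m * (m - 1) * d ^ (k + 1)) / n`, and it creates at most `d ^ (k + 2)` of them. -/
def momentExponent (m d k : ℕ) : ℕ :=
  2 ^ d ^ (k + 2) * ((m + 2) * (m * (m - 1) * d ^ (k + 1)))

lemma card_attachSets (m d n : ℕ) (g : SimpleGraph ℕ) :
    (attachSets m d n g).card = (lowDegSet d g n).card.choose m :=
  Finset.card_powersetCard _ _

lemma mem_attachSets {m d n : ℕ} {g : SimpleGraph ℕ} {S : Finset ℕ} :
    S ∈ attachSets m d n g ↔ S ⊆ lowDegSet d g n ∧ S.card = m :=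
  Finset.mem_powersetCard

lemma notMem_of_mem_attachSets {m d n : ℕ} {g : SimpleGraph ℕ} {S : Finset ℕ}
    (hS : S ∈ attachSets m d n g) : n + 1 ∉ S := fun h => by
  simpa using lowDegSet_subset_Icc d g n ((mem_attachSets.1 hS).1 h)

namespace IsAdmissible

variable {m d n : ℕ} {g : SimpleGraph ℕ}

lemma injOn_attachStep (hg : IsAdmissible m d n g) :
    Set.InjOn (attachStep g (n + 1)) (attachSets m d n g) := fun S hS T hT h => by
  have hS' := neighborSet_attachStep_self hg.isIsolated_succ (notMem_of_mem_attachSets hS)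
  have hT' := neighborSet_attachStep_self hg.isIsolated_succ (notMem_of_mem_attachSets hT)
  rw [h, hT'] at hS'
  exact_mod_cast hS'.symm

lemma pairwiseDisjoint_attachStep_fibres {Ω : Type*} (hg : IsAdmissible m d n g)
    (X : Ω → SimpleGraph ℕ) :
    Set.PairwiseDisjoint (attachSets m d n g) fun S => {ω | X ω = attachStep g (n + 1) S} :=
  fun _ hS _ hT hST => Set.disjoint_left.2 fun ω (hωS : X ω = _) (hωT : X ω = _) =>
    hST (hg.injOn_attachStep hS hT (hωS.symm.trans hωT))

open Classical in
lemma mul_card_filter_isWalkJoined_le (hg : IsAdmissible m d n g) (hm : 2 ≤ m) (hd : 2 * m < d)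
    (ℓ : ℕ) :
    n * ((attachSets m d n g).filter (IsWalkJoined g ℓ)).card
      ≤ (m + 2) * (m * (m - 1) * d ^ ℓ) * (attachSets m d n g).card :=
  calc n * ((attachSets m d n g).filter (IsWalkJoined g ℓ)).card
      ≤ (m + 2) * ((lowDegSet d g n).card - 1) *
          ((attachSets m d n g).filter (IsWalkJoined g ℓ)).card := by
        gcongr
        exact hg.le_mul_card_lowDegSet_sub_one hm hd
    _ = (m + 2) * (((lowDegSet d g n).card - 1) *
          ((attachSets m d n g).filter (IsWalkJoined g ℓ)).card) := mul_assoc _ _ _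
    _ ≤ (m + 2) * (m * (m - 1) * d ^ ℓ * (attachSets m d n g).card) := by
        rw [card_attachSets]
        exact Nat.mul_le_mul_left _
          (pred_mul_card_filter_isWalkJoined_le hg.encard_neighborSet_le _ hm ℓ)
    _ = (m + 2) * (m * (m - 1) * d ^ ℓ) * (attachSets m d n g).card := (mul_assoc _ _ _).symm

open Classical in
lemma two_pow_cycleCount_attachStep_le (hg : IsAdmissible m d n g) (hd : m ≤ d) {S : Finset ℕ}
    (hS : S ∈ attachSets m d n g) (k : ℕ) :
    2 ^ cycleCount (attachStep g (n + 1) S) (k + 3) ≤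
      2 ^ cycleCount g (k + 3) * (1 + if IsWalkJoined g (k + 1) S then 2 ^ d ^ (k + 2) else 0) := by
  obtain ⟨hlow, hcard⟩ := mem_attachSets.1 hS
  split_ifs with hjoin
  · calc 2 ^ cycleCount (attachStep g (n + 1) S) (k + 3)
        ≤ 2 ^ (cycleCount g (k + 3) + d ^ (k + 2)) := by
          gcongr
          · exact one_le_two
          · exact cycleCount_attachStep_le hg.finite_support
              (hg.attach hd hlow hcard).encard_neighborSet_le (k + 1)
      _ ≤ 2 ^ cycleCount g (k + 3) * (1 + 2 ^ d ^ (k + 2)) := by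
          rw [pow_add]
          gcongr
          exact Nat.le_add_left _ _
  · rw [add_zero, mul_one]
    gcongr
    · exact one_le_two
    · exact cycleCount_attachStep_le_of_not_isWalkJoined hg.finite_support hg.isIsolated_succ hjoin

lemma mul_sum_two_pow_cycleCount_le (hg : IsAdmissible m d n g) (hm : 2 ≤ m) (hd : 2 * m < d)
    (k : ℕ) :
    n * ∑ S ∈ attachSets m d n g, 2 ^ cycleCount (attachStep g (n + 1) S) (k + 3) ≤
      (n + momentExponent m d k) * 2 ^ cycleCount g (k + 3) * (attachSets m d n g).card := by
  classical
  set J := ((attachSets m d n g).filter (IsWalkJoined g (k + 1))).card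
  have hJ : n * J ≤ (m + 2) * (m * (m - 1) * d ^ (k + 1)) * (attachSets m d n g).card :=
    hg.mul_card_filter_isWalkJoined_le hm hd (k + 1)
  calc n * ∑ S ∈ attachSets m d n g, 2 ^ cycleCount (attachStep g (n + 1) S) (k + 3)
      ≤ n * ∑ S ∈ attachSets m d n g, 2 ^ cycleCount g (k + 3) *
          (1 + if IsWalkJoined g (k + 1) S then 2 ^ d ^ (k + 2) else 0) := by
        gcongr with S hS
        exact hg.two_pow_cycleCount_attachStep_le (by omega) hS k
    _ = 2 ^ cycleCount g (k + 3) *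
          (n * (attachSets m d n g).card + 2 ^ d ^ (k + 2) * (n * J)) := by
        rw [← Finset.mul_sum, Finset.sum_add_distrib, ← Finset.sum_filter, Finset.sum_const,
          Finset.sum_const, smul_eq_mul, smul_eq_mul]
        ring
    _ ≤ 2 ^ cycleCount g (k + 3) * (n * (attachSets m d n g).card + 2 ^ d ^ (k + 2) *
          ((m + 2) * (m * (m - 1) * d ^ (k + 1)) * (attachSets m d n g).card)) := by
        gcongr
    _ = (n + momentExponent m d k) * 2 ^ cycleCount g (k + 3) * (attachSets m d n g).card := by
        rw [momentExponent]
        ring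

end IsAdmissible

section FinitePartition

variable {Ω ι : Type*} [MeasurableSpace Ω] {μ : Measure Ω} {s : Finset ι} {E : ι → Set Ω}

lemma ae_exists_mem_of_sum_measure_eq [IsFiniteMeasure μ] (hE : ∀ i ∈ s, MeasurableSet (E i))
    (hdisj : Set.PairwiseDisjoint s E) (hsum : ∑ i ∈ s, μ (E i) = μ Set.univ) :
    ∀ᵐ ω ∂μ, ∃ i ∈ s, ω ∈ E i := by
  have hmem : ∀ᵐ ω ∂μ, ω ∈ ⋃ i ∈ s, E i :=
    (ae_mem_iff_measure_eq (s.measurableSet_biUnion hE).nullMeasurableSet).2 <| by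
      rw [measure_biUnion_finset hdisj hE, hsum]
  simpa only [Set.mem_iUnion₂, exists_prop] using hmem

lemma lintegral_eq_sum_setLIntegral (hE : ∀ i ∈ s, MeasurableSet (E i))
    (hdisj : Set.PairwiseDisjoint s E) (hcover : ∀ᵐ ω ∂μ, ∃ i ∈ s, ω ∈ E i) (f : Ω → ℝ≥0∞) :
    ∫⁻ ω, f ω ∂μ = ∑ i ∈ s, ∫⁻ ω in E i, f ω ∂μ := by
  rw [← lintegral_biUnion_finset hdisj hE, Measure.restrict_eq_self_of_ae_mem]
  simpa only [Set.mem_iUnion₂, exists_prop] using hcover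

end FinitePartition

section Fibres

variable {Ω α β : Type*} [MeasurableSpace Ω] {μ : Measure Ω} {X : Ω → α}

lemma setLIntegral_fibre {a : α} (ha : MeasurableSet {ω | X ω = a}) (f : α → ℝ≥0∞) :
    ∫⁻ ω in {ω | X ω = a}, f (X ω) ∂μ = f a * μ {ω | X ω = a} := by
  rw [setLIntegral_congr_fun ha fun ω hω => congrArg f hω, setLIntegral_const]

lemma aemeasurable_comp_of_ae_mem_countable [MeasurableSpace β] {s : Set α} (hs : s.Countable)
    (hX : ∀ a, MeasurableSet {ω | X ω = a}) (hmem : ∀ᵐ ω ∂μ, X ω ∈ s) (f : α → β) :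
    AEMeasurable (fun ω => f (X ω)) μ := by
  have hs' : Countable s := hs
  have hcover : ∀ᵐ ω ∂μ, ω ∈ ⋃ a : s, {ω | X ω = a} := by
    filter_upwards [hmem] with ω hω
    exact Set.mem_iUnion.2 ⟨⟨X ω, hω⟩, rfl⟩
  rw [← Measure.restrict_eq_self_of_ae_mem hcover, aemeasurable_iUnion_iff]
  intro a
  refine (aemeasurable_const (b := f a)).congr ?_
  filter_upwards [ae_restrict_mem (hX a)] with ω hω
  exact congrArg f hω.symm

end Fibres

lemma add_mul_pow_le_mul_succ_pow (n K : ℕ) : (n + K) * n ^ K ≤ n * (n + 1) ^ K := by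
  induction K with
  | zero => simp
  | succ K ih =>
    calc (n + (K + 1)) * n ^ (K + 1) = (n * (n + K + 1)) * n ^ K := by ring
      _ ≤ ((n + 1) * (n + K)) * n ^ K := Nat.mul_le_mul_right _ (by nlinarith)
      _ = (n + 1) * ((n + K) * n ^ K) := by ring
      _ ≤ (n + 1) * (n * (n + 1) ^ K) := Nat.mul_le_mul_left _ ih
      _ = n * (n + 1) ^ (K + 1) := by ring

lemma le_mul_pow_of_mul_succ_le {u : ℕ → ℝ≥0∞} {N K : ℕ} (hN : 0 < N)
    (hu : ∀ n, N ≤ n → n * u (n + 1) ≤ (n + K) * u n) {n : ℕ} (hn : N ≤ n) :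
    u n ≤ u N * n ^ K := by
  induction n, hn using Nat.le_induction with
  | base => exact le_mul_of_one_le_right' (one_le_pow_of_one_le' (by exact_mod_cast hN) K)
  | succ n hn ih =>
    have hn0 : (n : ℝ≥0∞) ≠ 0 := by exact_mod_cast (hN.trans_le hn).ne'
    rw [← ENNReal.mul_le_mul_iff_right hn0 (ENNReal.natCast_ne_top n)]
    calc n * u (n + 1) ≤ (n + K) * u n := hu n hn
      _ ≤ (n + K) * (u N * n ^ K) := by gcongr
      _ = u N * (((n + K) * n ^ K : ℕ) : ℝ≥0∞) := by push_cast; ring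
      _ ≤ u N * ((n * (n + 1) ^ K : ℕ) : ℝ≥0∞) :=
          mul_le_mul_right (Nat.cast_le.2 (add_mul_pow_le_mul_succ_pow n K)) _
      _ = n * (u N * ((n + 1 : ℕ) : ℝ≥0∞) ^ K) := by push_cast; ring

lemma ae_eventually_lt_of_lintegral_le {Ω : Type*} [MeasurableSpace Ω] {μ : Measure Ω}
    {Y : ℕ → Ω → ℝ≥0∞} {C : ℝ≥0∞} {K : ℕ} (hC : C ≠ ∞)
    (hY : ∀ᶠ n in atTop, AEMeasurable (Y n) μ)
    (hmean : ∀ᶠ n : ℕ in atTop, ∫⁻ ω, Y n ω ∂μ ≤ C * n ^ K) :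
    ∀ᵐ ω ∂μ, ∀ᶠ n : ℕ in atTop, Y n ω < n ^ (K + 2) := by
  obtain ⟨N, hN⟩ := eventually_atTop.1 (hY.and (hmean.and (eventually_gt_atTop 0)))
  have hmarkov : ∀ n, N ≤ n →
      μ {ω | (n : ℝ≥0∞) ^ (K + 2) ≤ Y n ω} ≤ C * ENNReal.ofReal (1 / (n : ℝ) ^ 2) := by
    intro n hn
    obtain ⟨hYn, hmeann, hpos⟩ := hN n hn
    have hn0 : (n : ℝ≥0∞) ≠ 0 := by exact_mod_cast hpos.ne'
    have hntop : (n : ℝ≥0∞) ≠ ∞ := ENNReal.natCast_ne_top n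
    calc μ {ω | (n : ℝ≥0∞) ^ (K + 2) ≤ Y n ω}
        ≤ (∫⁻ ω, Y n ω ∂μ) / (n : ℝ≥0∞) ^ (K + 2) :=
          meas_ge_le_lintegral_div hYn (pow_ne_zero _ hn0) (ENNReal.pow_ne_top hntop)
      _ ≤ C * n ^ K / (n : ℝ≥0∞) ^ (K + 2) := by gcongr
      _ = C * (1 / (n : ℝ≥0∞) ^ 2) := by
          rw [pow_add, mul_comm C, ENNReal.mul_div_mul_left _ _ (pow_ne_zero K hn0)
            (ENNReal.pow_ne_top hntop), mul_one_div]
      _ = C * ENNReal.ofReal (1 / (n : ℝ) ^ 2) := by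
          rw [ENNReal.ofReal_div_of_pos (by positivity), ENNReal.ofReal_one,
            ENNReal.ofReal_pow (by positivity), ENNReal.ofReal_natCast]
  have hsummable : Summable fun n : ℕ => 1 / ((n + N : ℕ) : ℝ) ^ 2 :=
    (summable_nat_add_iff N).2 (Real.summable_one_div_nat_pow.2 one_lt_two)
  have hsum : ∑' n, μ {ω | ((n + N : ℕ) : ℝ≥0∞) ^ (K + 2) ≤ Y (n + N) ω} ≠ ∞ := by
    refine ne_top_of_le_ne_top ?_ (ENNReal.tsum_le_tsum fun n => hmarkov _ (Nat.le_add_left N n))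
    rw [ENNReal.tsum_mul_left]
    exact ENNReal.mul_ne_top hC hsummable.tsum_ofReal_ne_top
  filter_upwards [ae_eventually_notMem hsum] with ω hω
  rw [← map_add_atTop_eq_nat N, eventually_map]
  filter_upwards [hω] with n hn
  exact not_le.1 hn

lemma cast_le_div_log_two_mul_log {x n K : ℕ} (h : 2 ^ x ≤ n ^ K) :
    (x : ℝ) ≤ K / Real.log 2 * Real.log n := by
  have hlog := Real.log_le_log (by positivity) (show (2 : ℝ) ^ x ≤ (n : ℝ) ^ K by exact_mod_cast h)
  rw [Real.log_pow, Real.log_pow] at hlog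
  rwa [div_mul_eq_mul_div, le_div_iff₀ (Real.log_pos one_lt_two)]

namespace IsUAProcess

variable {m d : ℕ} {Ω : Type*} [MeasurableSpace Ω] {μ : Measure Ω} {G : ℕ → Ω → SimpleGraph ℕ}

lemma measurableSet_fibre (hG : IsUAProcess m d μ G) (n : ℕ) (g : SimpleGraph ℕ) :
    MeasurableSet {ω | G n ω = g} :=
  hG.1 n g

lemma restrict_fibre_apply (hG : IsUAProcess m d μ G) {n : ℕ} (hn : m ≤ n) {g : SimpleGraph ℕ}
    {S : Finset ℕ} (hS : S ∈ attachSets m d n g) :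
    μ.restrict {ω | G n ω = g} {ω | G (n + 1) ω = attachStep g (n + 1) S} =
      μ {ω | G n ω = g} / (attachSets m d n g).card := by
  obtain ⟨hlow, hcard⟩ := mem_attachSets.1 hS
  rw [Measure.restrict_apply (hG.measurableSet_fibre _ _), card_attachSets]
  exact hG.2.2 n hn g S hlow hcard

lemma ae_restrict_fibre_exists_eq_attachStep [IsFiniteMeasure μ] (hG : IsUAProcess m d μ G)
    (hd : 2 * m < d) {n : ℕ} (hn : m ≤ n) {g : SimpleGraph ℕ} (hg : IsAdmissible m d n g) :
    ∀ᵐ ω ∂μ.restrict {ω | G n ω = g},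
      ∃ S ∈ attachSets m d n g, G (n + 1) ω = attachStep g (n + 1) S := by
  refine ae_exists_mem_of_sum_measure_eq
    (E := fun S => {ω | G (n + 1) ω = attachStep g (n + 1) S})
    (fun S _ => hG.measurableSet_fibre _ _) (hg.pairwiseDisjoint_attachStep_fibres _) ?_
  have hcard : ((attachSets m d n g).card : ℝ≥0∞) ≠ 0 := by
    rw [card_attachSets]
    exact_mod_cast (Nat.choose_pos (hg.le_card_lowDegSet hd hn)).ne'
  rw [Finset.sum_congr rfl fun S => hG.restrict_fibre_apply hn, Finset.sum_const, nsmul_eq_mul,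
    Measure.restrict_apply_univ, ENNReal.mul_div_cancel hcard (ENNReal.natCast_ne_top _)]

lemma ae_isAdmissible [IsFiniteMeasure μ] (hG : IsUAProcess m d μ G) (hd : 2 * m < d) {n : ℕ}
    (hn : m ≤ n) : ∀ᵐ ω ∂μ, IsAdmissible m d n (G n ω) := by
  induction n, hn using Nat.le_induction with
  | base => exact .of_forall fun ω => hG.2.1 ω ▸ isAdmissible_initGraph (by omega)
  | succ n hn ih =>
    have hstep : ∀ᵐ ω ∂μ, ∀ g ∈ {g | IsAdmissible m d n g}, G n ω = g →
        IsAdmissible m d (n + 1) (G (n + 1) ω) := by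
      refine (ae_ball_iff finite_setOf_isAdmissible.countable).2 fun g hg => ?_
      refine (ae_restrict_iff' (hG.measurableSet_fibre n g)).1 ?_
      filter_upwards [hG.ae_restrict_fibre_exists_eq_attachStep hd hn hg] with ω ⟨S, hS, hω⟩
      obtain ⟨hlow, hcard⟩ := mem_attachSets.1 hS
      exact hω ▸ hg.attach (by omega) hlow hcard
    filter_upwards [ih, hstep] with ω hω hstepω
    exact hstepω _ hω rfl

lemma setLIntegral_fibre_succ [IsFiniteMeasure μ] (hG : IsUAProcess m d μ G) (hd : 2 * m < d)
    {n : ℕ} (hn : m ≤ n) {g : SimpleGraph ℕ} (hg : IsAdmissible m d n g)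
    (f : SimpleGraph ℕ → ℝ≥0∞) :
    ∫⁻ ω in {ω | G n ω = g}, f (G (n + 1) ω) ∂μ =
      (∑ S ∈ attachSets m d n g, f (attachStep g (n + 1) S)) *
        (μ {ω | G n ω = g} / (attachSets m d n g).card) := by
  rw [lintegral_eq_sum_setLIntegral (fun S _ => hG.measurableSet_fibre _ _)
    (hg.pairwiseDisjoint_attachStep_fibres _) (hG.ae_restrict_fibre_exists_eq_attachStep hd hn hg),
    Finset.sum_mul]
  refine Finset.sum_congr rfl fun S hS => ?_
  rw [setLIntegral_fibre (hG.measurableSet_fibre _ _), hG.restrict_fibre_apply hn hS]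

lemma mul_setLIntegral_fibre_two_pow_cycleCount_le [IsFiniteMeasure μ] (hG : IsUAProcess m d μ G)
    (hm : 2 ≤ m) (hd : 2 * m < d) (k : ℕ) {n : ℕ} (hn : m ≤ n) {g : SimpleGraph ℕ}
    (hg : IsAdmissible m d n g) :
    n * ∫⁻ ω in {ω | G n ω = g}, 2 ^ cycleCount (G (n + 1) ω) (k + 3) ∂μ ≤
      (n + momentExponent m d k) * ∫⁻ ω in {ω | G n ω = g}, 2 ^ cycleCount (G n ω) (k + 3) ∂μ := by
  set p := μ {ω | G n ω = g}
  have hstep :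
      (n : ℝ≥0∞) * ∑ S ∈ attachSets m d n g, 2 ^ cycleCount (attachStep g (n + 1) S) (k + 3) ≤
        (n + momentExponent m d k) * 2 ^ cycleCount g (k + 3) * (attachSets m d n g).card := by
    exact_mod_cast hg.mul_sum_two_pow_cycleCount_le hm hd k
  calc n * ∫⁻ ω in {ω | G n ω = g}, 2 ^ cycleCount (G (n + 1) ω) (k + 3) ∂μ
      = n * (∑ S ∈ attachSets m d n g, 2 ^ cycleCount (attachStep g (n + 1) S) (k + 3)) *
          (p / (attachSets m d n g).card) := by
        rw [hG.setLIntegral_fibre_succ hd hn hg fun g' => 2 ^ cycleCount g' (k + 3), mul_assoc]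
    _ ≤ (n + momentExponent m d k) * 2 ^ cycleCount g (k + 3) * (attachSets m d n g).card *
          (p / (attachSets m d n g).card) := by gcongr
    _ ≤ (n + momentExponent m d k) * (2 ^ cycleCount g (k + 3) * p) := by
        rw [mul_assoc, mul_assoc]
        gcongr
        exact ENNReal.mul_div_le
    _ = (n + momentExponent m d k) *
          ∫⁻ ω in {ω | G n ω = g}, 2 ^ cycleCount (G n ω) (k + 3) ∂μ := by
        rw [setLIntegral_fibre (hG.measurableSet_fibre n g) fun g' => 2 ^ cycleCount g' (k + 3)]

lemma mul_lintegral_two_pow_cycleCount_succ_le [IsFiniteMeasure μ] (hG : IsUAProcess m d μ G)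
    (hm : 2 ≤ m) (hd : 2 * m < d) (k : ℕ) {n : ℕ} (hn : m ≤ n) :
    n * ∫⁻ ω, 2 ^ cycleCount (G (n + 1) ω) (k + 3) ∂μ ≤
      (n + momentExponent m d k) * ∫⁻ ω, 2 ^ cycleCount (G n ω) (k + 3) ∂μ := by
  have hsplit := lintegral_eq_sum_setLIntegral (μ := μ)
    (s := finite_setOf_isAdmissible.toFinset) (fun g _ => hG.measurableSet_fibre n g)
    (Set.pairwiseDisjoint_fiber (G n) _)
    ((hG.ae_isAdmissible hd hn).mono fun ω hω => ⟨G n ω, by simpa using hω, rfl⟩)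
  rw [hsplit, hsplit, Finset.mul_sum, Finset.mul_sum]
  exact Finset.sum_le_sum fun g hg => hG.mul_setLIntegral_fibre_two_pow_cycleCount_le hm hd k hn
    (by simpa using hg)

lemma lintegral_two_pow_cycleCount_le [IsProbabilityMeasure μ] (hG : IsUAProcess m d μ G)
    (hm : 2 ≤ m) (hd : 2 * m < d) (k : ℕ) {n : ℕ} (hn : m ≤ n) :
    ∫⁻ ω, 2 ^ cycleCount (G n ω) (k + 3) ∂μ ≤
      2 ^ cycleCount (initGraph m) (k + 3) * n ^ momentExponent m d k := by
  have hinit : ∫⁻ ω, 2 ^ cycleCount (G m ω) (k + 3) ∂μ =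
      2 ^ cycleCount (initGraph m) (k + 3) := by
    simp [hG.2.1]
  rw [← hinit]
  exact le_mul_pow_of_mul_succ_le (by omega)
    (fun n hn => hG.mul_lintegral_two_pow_cycleCount_succ_le hm hd k hn) hn

lemma aemeasurable_two_pow_cycleCount [IsFiniteMeasure μ] (hG : IsUAProcess m d μ G)
    (hd : 2 * m < d) (r : ℕ) {n : ℕ} (hn : m ≤ n) :
    AEMeasurable (fun ω => (2 : ℝ≥0∞) ^ cycleCount (G n ω) r) μ :=
  aemeasurable_comp_of_ae_mem_countable finite_setOf_isAdmissible.countable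
    (hG.measurableSet_fibre n) (hG.ae_isAdmissible hd hn) fun g => 2 ^ cycleCount g r

lemma ae_eventually_two_pow_cycleCount_lt [IsProbabilityMeasure μ] (hG : IsUAProcess m d μ G)
    (hm : 2 ≤ m) (hd : 2 * m < d) (k : ℕ) :
    ∀ᵐ ω ∂μ, ∀ᶠ n : ℕ in atTop,
      2 ^ cycleCount (G n ω) (k + 3) < n ^ (momentExponent m d k + 2) := by
  have hlt := ae_eventually_lt_of_lintegral_le (μ := μ)
    (Y := fun n ω => 2 ^ cycleCount (G n ω) (k + 3)) (by finiteness)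
    ((eventually_ge_atTop m).mono fun n => hG.aemeasurable_two_pow_cycleCount hd (k + 3))
    ((eventually_ge_atTop m).mono fun n => hG.lintegral_two_pow_cycleCount_le hm hd k)
  filter_upwards [hlt] with ω hω
  filter_upwards [hω] with n hn
  exact_mod_cast hn

end IsUAProcess

/-- In the bounded-degree uniform attachment process with `m ≥ 2`, for every `r > 2` there
is a constant `C` such that almost surely the number of `r`-cycles in `G_n` is at most
`C·ln n` for all sufficiently large `n`. -/
theorem uniform_attachment_cycle_upper_bound
    (m d : ℕ) (hm : 2 ≤ m) (hd : 2 * m < d)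
    {Ω : Type*} [MeasurableSpace Ω] (μ : Measure Ω) [IsProbabilityMeasure μ]
    (G : ℕ → Ω → SimpleGraph ℕ) (hG : IsUAProcess m d μ G)
    (r : ℕ) (hr : 2 < r) :
    ∃ C : ℝ, ∀ᵐ ω ∂μ, ∀ᶠ n : ℕ in atTop,
      (cycleCount (G n ω) r : ℝ) ≤ C * Real.log n := by
  obtain ⟨k, rfl⟩ : ∃ k, r = k + 3 := Nat.exists_eq_add_of_le' hr
  refine ⟨((momentExponent m d k + 2 : ℕ) : ℝ) / Real.log 2, ?_⟩
  filter_upwards [hG.ae_eventually_two_pow_cycleCount_lt hm hd k] with ω hω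
  filter_upwards [hω] with n hn
  exact cast_le_div_log_two_mul_log hn.le
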